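/- arXiv:1705.09861 — 2 statements merged into one kernel-verified Lean document; each statement's English description precedes it below -/
import Mathlib

section
/- Let e₁, e₂, e₃, o ∈ ℤ₂^d be vectors such that e₁, e₂, e₃ are even and o is odd. Then there exist an even vector f ∈ ℤ₂^d and three odd vectors p₁, p₂, p₃ ∈ ℤ₂^d such that e₁·e₁* + e₂·e₂* + e₃·e₃* + o·o* = f·f* + p₁·p₁* + p₂·p₂* + p₃·p₃* (an equality of d×d matrices, where v·v* denotes the rank-one outer product of v with itself) and span{e₁, e₂, e₃, o} = span{f, p₁, p₂, p₃}. -/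
/-!
Put `s = e₁ + e₂ + e₃ + o` and add `s` to each of the four vectors. Over `ℤ₂` this is the action of
the `4 × 4` matrix `1 + J`, with `J` the all-ones matrix. Since `J² = 4J = 0`, this matrix is
symmetric and squares to `1`, so it is orthogonal: it preserves the sum of the outer products, and,
being invertible, the span. In characteristic two `v ↦ (v, v)` is additive and `s` is odd, so adding
`s` flips every parity: `f = o + s = e₁ + e₂ + e₃` is even and `pᵢ = eᵢ + s` is odd.
-/

open Matrix

/-- The dot product of two vectors over `ℤ₂`. -/
def dotp {d : ℕ} (a b : Fin d → ZMod 2) : ZMod 2 := ∑ n, a n * b n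

/-- A vector over `ℤ₂` is even if its dot product with itself is `0`. -/
def IsEvenVec {d : ℕ} (v : Fin d → ZMod 2) : Prop := dotp v v = 0

/-- A vector over `ℤ₂` is odd if its dot product with itself is `1`. -/
def IsOddVec {d : ℕ} (v : Fin d → ZMod 2) : Prop := dotp v v = 1

/-- The rank-one outer product `v·v*` of a vector with itself. -/
def outer {d : ℕ} (v : Fin d → ZMod 2) : Matrix (Fin d) (Fin d) (ZMod 2) :=
  Matrix.vecMulVec v v

/-- In characteristic two the cross terms cancel, so `v ↦ (v, v)` is additive. -/
lemma dotp_add_self {d : ℕ} (a b : Fin d → ZMod 2) :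
    dotp (a + b) (a + b) = dotp a a + dotp b b := by
  have h2 : (2 : ZMod 2) = 0 := rfl
  simp only [dotp, ← Finset.sum_add_distrib, Pi.add_apply]
  refine Finset.sum_congr rfl fun n _ => ?_
  linear_combination (a n * b n) * h2

/-- The sums of three out of four vectors lie in the span of the four. -/
lemma span_triple_sums_le {d : ℕ} (a b c e : Fin d → ZMod 2) :
    Submodule.span (ZMod 2) ({a + b + c, b + c + e, a + c + e, a + b + e} : Set (Fin d → ZMod 2)) ≤
      Submodule.span (ZMod 2) {a, b, c, e} := by
  have ha : a ∈ Submodule.span (ZMod 2) {a, b, c, e} := Submodule.subset_span (by simp)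
  have hb : b ∈ Submodule.span (ZMod 2) {a, b, c, e} := Submodule.subset_span (by simp)
  have hc : c ∈ Submodule.span (ZMod 2) {a, b, c, e} := Submodule.subset_span (by simp)
  have he : e ∈ Submodule.span (ZMod 2) {a, b, c, e} := Submodule.subset_span (by simp)
  rw [Submodule.span_le]
  rintro x (rfl | rfl | rfl | rfl) <;>
    exact add_mem (add_mem (by assumption) (by assumption)) (by assumption)

theorem stmt_12 {d : ℕ} (e₁ e₂ e₃ o : Fin d → ZMod 2)
    (he₁ : IsEvenVec e₁) (he₂ : IsEvenVec e₂) (he₃ : IsEvenVec e₃)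
    (ho : IsOddVec o) :
    ∃ f p₁ p₂ p₃ : Fin d → ZMod 2,
      IsEvenVec f ∧ IsOddVec p₁ ∧ IsOddVec p₂ ∧ IsOddVec p₃ ∧
      outer e₁ + outer e₂ + outer e₃ + outer o =
        outer f + outer p₁ + outer p₂ + outer p₃ ∧
      Submodule.span (ZMod 2) ({e₁, e₂, e₃, o} : Set (Fin d → ZMod 2)) =
        Submodule.span (ZMod 2) ({f, p₁, p₂, p₃} : Set (Fin d → ZMod 2)) := by
  have h2 : (2 : ZMod 2) = 0 := rfl
  unfold IsEvenVec at he₁ he₂ he₃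
  unfold IsOddVec at ho
  refine ⟨e₁ + e₂ + e₃, e₂ + e₃ + o, e₁ + e₃ + o, e₁ + e₂ + o, ?_, ?_, ?_, ?_, ?_, ?_⟩
  · simp [IsEvenVec, dotp_add_self, he₁, he₂, he₃]
  · simp [IsOddVec, dotp_add_self, he₂, he₃, ho]
  · simp [IsOddVec, dotp_add_self, he₁, he₃, ho]
  · simp [IsOddVec, dotp_add_self, he₁, he₂, ho]
  · ext i j
    simp only [outer, Matrix.add_apply, Matrix.vecMulVec_apply, Pi.add_apply]
    -- with `s` the sum of the `v`, `∑ (s - v)(s - v)* = ∑ v v* + 2 s s*`, as there are four `v`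
    linear_combination (-(e₁ i + e₂ i + e₃ i + o i) * (e₁ j + e₂ j + e₃ j + o j)) * h2
  · refine le_antisymm ?_ (span_triple_sums_le e₁ e₂ e₃ o)
    -- the transformation is an involution up to the order of the vectors
    have key := span_triple_sums_le (e₂ + e₃ + o) (e₁ + e₃ + o) (e₁ + e₂ + o) (e₁ + e₂ + e₃)
    have h₁ : (e₁ + e₃ + o) + (e₁ + e₂ + o) + (e₁ + e₂ + e₃) = e₁ := by
      ext i; simp only [Pi.add_apply]; linear_combination (e₁ i + e₂ i + e₃ i + o i) * h2
    have h₂ : (e₂ + e₃ + o) + (e₁ + e₂ + o) + (e₁ + e₂ + e₃) = e₂ := by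
      ext i; simp only [Pi.add_apply]; linear_combination (e₁ i + e₂ i + e₃ i + o i) * h2
    have h₃ : (e₂ + e₃ + o) + (e₁ + e₃ + o) + (e₁ + e₂ + e₃) = e₃ := by
      ext i; simp only [Pi.add_apply]; linear_combination (e₁ i + e₂ i + e₃ i + o i) * h2
    have h₄ : (e₂ + e₃ + o) + (e₁ + e₃ + o) + (e₁ + e₂ + o) = o := by
      ext i; simp only [Pi.add_apply]; linear_combination (e₁ i + e₂ i + e₃ i + o i) * h2
    rw [h₁, h₂, h₃, h₄] at key
    refine (Submodule.span_mono ?_).trans (key.trans (Submodule.span_mono ?_))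
    · rintro x (rfl | rfl | rfl | rfl) <;> simp
    · rintro x (rfl | rfl | rfl | rfl) <;> simp
end

section
/- Let S be a d×d parity indicative symmetric matrix over ℤ₂ with diag(S) ≠ 0 (some diagonal entry equals 1) and rank(S) = d. If F = (f_1, …, f_d) is a d-element frame for ℤ₂^d with S = Θ_F Θ_F*, then (f_i, f_i) = 1 for every 1 ≤ i ≤ d (i.e., every frame vector is odd). -/
/-!
Write `A` for the synthesis operator and `1` for the all-ones vector. Every `a ∈ ℤ₂` satisfies
`a * a = a`, so the dot product of a vector with itself is the sum of its entries. Hence the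
diagonal of `S = A Aᵀ` is `A 1`, while the parities of the rows of `S` form the vector
`S 1 = A (Aᵀ 1)`. Parity indicativity says that these agree, `A 1 = A (Aᵀ 1)`. The columns of `A`
are `d` vectors spanning `ℤ₂^d`, so `A` is injective and `Aᵀ 1 = 1`: the entries of each `F i` sum
to `1`, that is, each `F i` is odd.
-/

open Matrix

/-- The synthesis operator of a family of `K` vectors in `ℤ₂^d`:
the `d × K` matrix whose `j`-th column is `F j`. -/
def synthesis {d K : ℕ} (F : Fin K → Fin d → ZMod 2) :
    Matrix (Fin d) (Fin K) (ZMod 2) :=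
  Matrix.of fun i j => F j i

/-- A family of vectors in `ℤ₂^d` is a (binary) frame if it spans `ℤ₂^d`. -/
def IsFrame {d K : ℕ} (F : Fin K → Fin d → ZMod 2) : Prop :=
  Submodule.span (ZMod 2) (Set.range F) = ⊤

/-- A `d × d` symmetric matrix `S` over `ℤ₂` is parity indicative if, for every `i`,
the diagonal entry `S i i = 1` if and only if the `i`-th row of `S` is odd. -/
def ParityIndicative {d : ℕ} (S : Matrix (Fin d) (Fin d) (ZMod 2)) : Prop :=
  ∀ i, S i i = 1 ↔ IsOddVec (S i)

/-- `‖α‖₀`, the number of nonzero entries of a vector `α ∈ ℤ₂^K`. -/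
def zeroNorm {K : ℕ} (α : Fin K → ZMod 2) : ℕ :=
  (Finset.univ.filter fun i => α i ≠ 0).card

theorem zmod_two_mul_self (a : ZMod 2) : a * a = a := by
  revert a; decide

theorem zmod_two_eq_of_eq_one_iff (a b : ZMod 2) (h : a = 1 ↔ b = 1) : a = b := by
  revert a b; decide

theorem dotp_self {d : ℕ} (v : Fin d → ZMod 2) : dotp v v = ∑ n, v n := by
  simp only [dotp, zmod_two_mul_self]

theorem synthesis_mulVec_injective {d : ℕ} (F : Fin d → Fin d → ZMod 2) (hF : IsFrame F) :
    Function.Injective (synthesis F).mulVec := by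
  rw [Matrix.mulVec_injective_iff]
  exact linearIndependent_of_top_le_span_of_card_eq_finrank (b := F) hF.ge (by simp)

theorem stmt_14 {d : ℕ} (S : Matrix (Fin d) (Fin d) (ZMod 2))
    (hsymm : S.IsSymm) (hpi : ParityIndicative S)
    (hdiag : S.diag ≠ 0) (hrank : S.rank = d)
    (F : Fin d → Fin d → ZMod 2) (hF : IsFrame F)
    (hS : S = synthesis F * (synthesis F)ᵀ) :
    ∀ i, dotp (F i) (F i) = 1 := by
  have key : (synthesis F).mulVec ((synthesis F)ᵀ.mulVec 1) = (synthesis F).mulVec 1 := by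
    rw [Matrix.mulVec_mulVec, ← hS]
    ext i
    have hrow : S i i = ∑ n, S i n := by
      rw [← dotp_self]
      exact zmod_two_eq_of_eq_one_iff _ _ (hpi i)
    have hdiag_i : S i i = ∑ n, synthesis F i n := by
      simp [hS, Matrix.mul_apply, zmod_two_mul_self]
    simpa [Matrix.mulVec, dotProduct] using hrow.symm.trans hdiag_i
  have hones := synthesis_mulVec_injective F hF key
  intro i
  rw [dotp_self]
  simpa [Matrix.mulVec, dotProduct, synthesis] using congrFun hones i
end
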